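/- Fix reals a > b > 0 and set T = log(a/b); fix C > 0 and a sequence of natural numbers (K_n) with K_n / log n → 0. For each integer n ≥ 3, let Z₁, …, Z_{⌈n/2⌉} be i.i.d. Bernoulli with success probability min(1, b·log n/n), let W₁, …, W_{⌈n/2⌉} be i.i.d. Bernoulli with success probability min(1, a·log n/n), and let h₁, …, h_{K_n} be i.i.d. real random variables with |h_j| ≤ C almost surely, with all of the Z's, W's and h's mutually independent. Then for every ε > 0 there exists N such that for all n ≥ N, P( Σ_{k=1}^{⌈n/2⌉} (Z_k − W_k) ≥ (1/T)·Σ_{j=1}^{K_n} h_j + 1 + log n / log log n ) ≥ n^{−(√a−√b)²/2 − ε}. -/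

import Mathlib

open MeasureTheory ProbabilityTheory Filter

/-- `⌈n/2⌉`. -/
noncomputable def half (n : ℕ) : ℕ := ⌈(n : ℝ) / 2⌉₊

/-- Upper Stirling bound in logarithmic form. -/
lemma log_factorial_upper (i : ℕ) (hi : 1 ≤ i) :
    Real.log (i.factorial : ℝ) ≤ i * Real.log i - i + Real.log i + 1 := by
  obtain ⟨k, rfl⟩ : ∃ k, i = k + 1 := ⟨i - 1, by omega⟩
  have h1 := Stirling.log_stirlingSeq'_antitone (Nat.zero_le k)
  simp only [Function.comp, Nat.succ_eq_add_one, zero_add] at h1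
  rw [Stirling.log_stirlingSeq_formula, Stirling.log_stirlingSeq_formula] at h1
  have hpos : (0 : ℝ) < ((k + 1 : ℕ) : ℝ) := by positivity
  have hlog : 0 ≤ Real.log ((k + 1 : ℕ) : ℝ) := Real.log_natCast_nonneg _
  rw [Real.log_mul (by norm_num) hpos.ne', Real.log_div hpos.ne' (Real.exp_pos 1).ne',
    Real.log_exp] at h1
  simp only [Nat.factorial_one, Nat.cast_one, Real.log_one, mul_one, Real.log_div one_ne_zero
    (Real.exp_pos 1).ne', Real.log_exp] at h1
  linarith

/-- Pointwise lower bound on the log of the binomial mass. -/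
lemma log_binom_lower (m i : ℕ) (hi : 1 ≤ i) (him : i ≤ m) (q : ℝ) (hq : 0 < q) (hq1 : q < 1) :
    i * Real.log (((m + 1 - i : ℕ) : ℝ) * q / i) + i - Real.log i - 1 - m * (q / (1 - q))
      ≤ Real.log ((m.choose i : ℝ) * q ^ i * (1 - q) ^ (m - i)) := by
  have hA : (0 : ℝ) < ((m + 1 - i : ℕ) : ℝ) := by
    have : 0 < m + 1 - i := by omega
    exact_mod_cast this
  have hi0 : (0 : ℝ) < i := by exact_mod_cast hi
  have hf : (0 : ℝ) < i.factorial := by exact_mod_cast Nat.factorial_pos i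
  have hc : (0 : ℝ) < m.choose i := by exact_mod_cast Nat.choose_pos him
  have h1q : 0 < 1 - q := by linarith
  have hch : i * Real.log ((m + 1 - i : ℕ) : ℝ) - Real.log i.factorial
      ≤ Real.log (m.choose i) := by
    have h1 : (((m + 1 - i : ℕ) : ℝ)) ^ i ≤ i.factorial * m.choose i := by
      have := Nat.pow_sub_le_descFactorial m i
      rw [Nat.descFactorial_eq_factorial_mul_choose] at this
      exact_mod_cast this
    have h2 := Real.log_le_log (by positivity) h1
    rw [Real.log_pow, Real.log_mul hf.ne' hc.ne'] at h2
    linarith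
  have hst := log_factorial_upper i hi
  rw [Real.log_mul (by positivity) (by positivity), Real.log_mul hc.ne' (by positivity),
    Real.log_pow, Real.log_pow, Real.log_div (by positivity) hi0.ne', Real.log_mul hA.ne' hq.ne']
  have hl : -(q / (1 - q)) ≤ Real.log (1 - q) := by
    have := Real.one_sub_inv_le_log_of_pos h1q
    have e : 1 - (1 - q)⁻¹ = -(q / (1 - q)) := by field_simp; ring
    linarith
  have hl0 : Real.log (1 - q) ≤ 0 := Real.log_nonpos h1q.le (by linarith)
  have hmi : ((m - i : ℕ) : ℝ) ≤ m := by exact_mod_cast Nat.sub_le m i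
  have h3 : (m : ℝ) * Real.log (1 - q) ≤ ((m - i : ℕ) : ℝ) * Real.log (1 - q) :=
    mul_le_mul_of_nonpos_right hmi hl0
  have h4 : (m : ℝ) * -(q / (1 - q)) ≤ m * Real.log (1 - q) :=
    mul_le_mul_of_nonneg_left hl (by positivity)
  linarith

lemma tendsto_log_nat : Tendsto (fun n : ℕ => Real.log n) atTop atTop :=
  Real.tendsto_log_atTop.comp tendsto_natCast_atTop_atTop

lemma tendsto_log_div_nat : Tendsto (fun n : ℕ => Real.log n / n) atTop (nhds 0) :=
  (Real.isLittleO_log_id_atTop.tendsto_div_nhds_zero).comp tendsto_natCast_atTop_atTop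

lemma tendsto_half : Tendsto (fun n : ℕ => (half n : ℝ) / n) atTop (nhds (1 / 2)) := by
  have := (tendsto_nat_ceil_mul_div_atTop (R := ℝ) (a := 1/2) (by norm_num)).comp
    tendsto_natCast_atTop_atTop
  refine this.congr fun n => ?_
  simp only [Function.comp, half]
  rw [one_div_mul_eq_div]

lemma binom_asymp (c s : ℝ) (hc : 0 < c) (hs : 0 < s) (i : ℕ → ℕ)
    (hi : Tendsto (fun n => (i n : ℝ) / Real.log n) atTop (nhds s)) (ε : ℝ) (hε : 0 < ε) :
    ∀ᶠ n : ℕ in atTop, c * Real.log n / n < 1 ∧ 0 < c * Real.log n / n ∧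
      Real.exp (Real.log n * (s * Real.log (c / (2 * s)) + s - c / 2 - ε)) ≤
      ((half n).choose (i n) : ℝ) * (c * Real.log n / n) ^ (i n)
        * (1 - c * Real.log n / n) ^ (half n - i n) := by
  have hL := tendsto_log_nat
  have hq : Tendsto (fun n : ℕ => c * Real.log n / n) atTop (nhds 0) := by
    have := tendsto_log_div_nat.const_mul c
    simpa [mul_div_assoc] using this
  have hiR : Tendsto (fun n => (i n : ℝ)) atTop atTop := by
    refine (hi.pos_mul_atTop hs hL).congr' ?_
    filter_upwards [hL.eventually_gt_atTop 0] with n hn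
    field_simp
  have hin : Tendsto (fun n => (i n : ℝ) / n) atTop (nhds 0) := by
    have := hi.mul tendsto_log_div_nat
    rw [mul_zero] at this
    refine this.congr' ?_
    filter_upwards [hL.eventually_gt_atTop 0] with n hn
    field_simp
  have hlogi : Tendsto (fun n => Real.log (i n) / Real.log n) atTop (nhds 0) := by
    have := ((Real.isLittleO_log_id_atTop.tendsto_div_nhds_zero).comp hiR).mul hi
    rw [zero_mul] at this
    refine this.congr' ?_
    filter_upwards [hiR.eventually_gt_atTop 0] with n hn
    simp only [Function.comp, id]
    field_simp
  have hinvL : Tendsto (fun n : ℕ => 1 / Real.log n) atTop (nhds 0) := by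
    exact tendsto_const_nhds.div_atTop hL
  have hinvn : Tendsto (fun n : ℕ => 1 / (n : ℝ)) atTop (nhds 0) :=
    tendsto_one_div_atTop_nhds_zero_nat
  have hlt : ∀ᶠ n : ℕ in atTop, i n ≤ half n := by
    have := tendsto_half.sub hin
    rw [sub_zero] at this
    filter_upwards [this.eventually_const_lt (by norm_num : (0 : ℝ) < 1 / 2),
      eventually_gt_atTop 0] with n hn hn0
    have hn0' : (0 : ℝ) < n := by exact_mod_cast hn0
    rw [← sub_div] at hn
    have := (div_pos_iff_of_pos_right hn0').1 hn
    have h' : (i n : ℝ) ≤ half n := by linarith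
    exact_mod_cast h'
  have harg : Tendsto (fun n : ℕ => ((half n : ℝ) / n + 1 / n - (i n : ℝ) / n) *
      (c * ((i n : ℝ) / Real.log n)⁻¹)) atTop (nhds (c / (2 * s))) := by
    have := ((tendsto_half.add hinvn).sub hin).mul ((hi.inv₀ hs.ne').const_mul c)
    convert this using 2
    field_simp
    ring
  have hG := ((((hi.mul (harg.log (by positivity))).add hi).sub hlogi).sub hinvL).sub
    (tendsto_half.mul ((tendsto_const_nhds (x := c)).div
      ((tendsto_const_nhds (x := (1 : ℝ))).sub hq) (by norm_num)))
  have hlim : s * Real.log (c / (2 * s)) + s - c / 2 - ε <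
      s * Real.log (c / (2 * s)) + s - 0 - 0 - 1 / 2 * (c / (1 - 0)) := by
    ring_nf; linarith
  filter_upwards [hG.eventually_const_lt hlim, hlt, hiR.eventually_gt_atTop 0,
    hL.eventually_gt_atTop 0, eventually_gt_atTop 0, hq.eventually_lt_const zero_lt_one]
    with n h1 h2 h3 h4 h5 h6
  simp only [Pi.div_apply] at h1
  have hn0 : (0 : ℝ) < n := by exact_mod_cast h5
  have hq0 : 0 < c * Real.log n / n := by positivity
  have h1q : 0 < 1 - c * Real.log n / n := by linarith
  have hch : (0 : ℝ) < (half n).choose (i n) := by exact_mod_cast Nat.choose_pos h2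
  refine ⟨h6, hq0, ?_⟩
  rw [← Real.le_log_iff_exp_le (by positivity)]
  refine le_trans ?_ (log_binom_lower (half n) (i n) (by exact_mod_cast h3) h2 _ hq0 h6)
  refine (mul_le_mul_of_nonneg_left h1.le h4.le).trans (le_of_eq ?_)
  have hcast : ((half n + 1 - i n : ℕ) : ℝ) = half n + 1 - i n := by
    rw [Nat.cast_sub (by omega)]; push_cast; ring
  have e1 : ((half n : ℝ) / n + 1 / n - (i n : ℝ) / n) * (c * ((i n : ℝ) / Real.log n)⁻¹)
      = ((half n + 1 - i n : ℕ) : ℝ) * (c * Real.log n / n) / i n := by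
    rw [hcast]; field_simp
  rw [e1]
  generalize Real.log (((half n + 1 - i n : ℕ) : ℝ) * (c * Real.log n / n) / i n) = X
  generalize Real.log (i n) = Y
  have e2 : (half n : ℝ) / n * (c / (1 - c * Real.log n / n)) =
     half n * (c * Real.log n / n / (1 - c * Real.log n / n)) / Real.log n := by
    generalize 1 - c * Real.log n / n = D
    field_simp
  rw [e2]
  generalize (half n : ℝ) * (c * Real.log n / n / (1 - c * Real.log n / n)) = D
  field_simp

lemma prob_lower {Ω : Type*} [MeasurableSpace Ω] (μ : Measure Ω) [IsProbabilityMeasure μ]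
    {m K : ℕ} (Z W : Fin m → Ω → ℝ) (h : Fin K → Ω → ℝ)
    (hmZ : ∀ k, Measurable (Z k)) (hmW : ∀ k, Measurable (W k))
    (hindep : iIndepFun (Sum.elim Z (Sum.elim W h)) μ)
    (q p : ℝ) (hq0 : 0 ≤ q) (hq1 : q ≤ 1) (hp0 : 0 ≤ p) (hp1 : p ≤ 1)
    (hZ : ∀ k, μ {ω | Z k ω = 1} = ENNReal.ofReal q ∧
      μ {ω | Z k ω = 0} = 1 - ENNReal.ofReal q)
    (hW : ∀ k, μ {ω | W k ω = 1} = ENNReal.ofReal p ∧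
      μ {ω | W k ω = 0} = 1 - ENNReal.ofReal p) (i j : ℕ) :
    ((m.choose i : ℝ) * q ^ i * (1 - q) ^ (m - i)) * ((m.choose j : ℝ) * p ^ j * (1 - p) ^ (m - j))
      ≤ (μ {ω | ∑ k, Z k ω = i ∧ ∑ k, W k ω = j}).toReal := by
  classical
  have hind : iIndepFun (Sum.elim Z W) μ := by
    have := hindep.precomp (g := Sum.map (id : Fin m → Fin m) (Sum.inl : Fin m → Fin m ⊕ Fin K))
      (Function.injective_id.sumMap Sum.inl_injective)
    refine (iIndepFun_congr ?_).1 this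
    rintro (k | k) <;> exact ae_of_all _ fun _ => rfl
  let v : Finset (Fin m) × Finset (Fin m) → Fin m ⊕ Fin m → ℝ := fun AB =>
    Sum.elim (fun k => if k ∈ AB.1 then 1 else 0) (fun k => if k ∈ AB.2 then 1 else 0)
  let E : Finset (Fin m) × Finset (Fin m) → Set Ω := fun AB =>
    ⋂ x ∈ (Finset.univ : Finset (Fin m ⊕ Fin m)), (Sum.elim Z W x) ⁻¹' {v AB x}
  have hmE : ∀ AB, MeasurableSet (E AB) := by
    intro AB
    refine Finset.measurableSet_biInter _ fun x _ => ?_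
    rcases x with k | k
    · exact hmZ k (measurableSet_singleton _)
    · exact hmW k (measurableSet_singleton _)
  have hEZ : ∀ AB ω, ω ∈ E AB → ∀ k, Z k ω = if k ∈ AB.1 then 1 else 0 := by
    intro AB ω hω k
    have := Set.mem_iInter₂.1 hω (Sum.inl k) (Finset.mem_univ _)
    simpa [v] using this
  have hEW : ∀ AB ω, ω ∈ E AB → ∀ k, W k ω = if k ∈ AB.2 then 1 else 0 := by
    intro AB ω hω k
    have := Set.mem_iInter₂.1 hω (Sum.inr k) (Finset.mem_univ _)
    simpa [v] using this
  have hdisj : ∀ AB AB', AB ≠ AB' → Disjoint (E AB) (E AB') := by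
    intro AB AB' hne
    rw [Set.disjoint_left]
    intro ω h1 h2
    apply hne
    ext k
    · have a1 := hEZ _ _ h1 k
      rw [hEZ _ _ h2 k] at a1
      split_ifs at a1 <;> simp_all
    · have a1 := hEW _ _ h1 k
      rw [hEW _ _ h2 k] at a1
      split_ifs at a1 <;> simp_all
  have aux : ∀ (V : Fin m → Ω → ℝ) (r : ℝ), 0 ≤ r → r ≤ 1 →
      (∀ k, μ {ω | V k ω = 1} = ENNReal.ofReal r ∧ μ {ω | V k ω = 0} = 1 - ENNReal.ofReal r) →
      ∀ A : Finset (Fin m), (∏ k, μ (V k ⁻¹' {if k ∈ A then (1:ℝ) else 0})).toReal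
        = r ^ A.card * (1 - r) ^ (m - A.card) := by
    intro V r h0 h1 hV A
    have : ∀ k, (μ (V k ⁻¹' {if k ∈ A then (1:ℝ) else 0})).toReal = if k ∈ A then r else 1 - r := by
      intro k
      split_ifs
      · have := (hV k).1
        change (μ {ω | V k ω = 1}).toReal = _
        rw [this, ENNReal.toReal_ofReal h0]
      · have := (hV k).2
        change (μ {ω | V k ω = 0}).toReal = _
        rw [this, ENNReal.toReal_sub_of_le (by simpa using h1) (by simp),
          ENNReal.toReal_ofReal h0]
        simp
    rw [ENNReal.toReal_prod]
    simp_rw [this]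
    rw [Finset.prod_ite]
    simp only [Finset.prod_const]
    congr 2
    · simp
    · rw [Finset.filter_not]
      simp [Finset.card_sdiff]
  have hprob : ∀ AB, (μ (E AB)).toReal = (q ^ AB.1.card * (1 - q) ^ (m - AB.1.card)) *
      (p ^ AB.2.card * (1 - p) ^ (m - AB.2.card)) := by
    intro AB
    have := hind.measure_inter_preimage_eq_mul Finset.univ (sets := fun x => {v AB x})
      (fun x _ => measurableSet_singleton _)
    change (μ (⋂ x ∈ (Finset.univ : Finset (Fin m ⊕ Fin m)), (Sum.elim Z W x) ⁻¹' {v AB x})).toReal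
      = _
    rw [this, Fintype.prod_sum_type, ENNReal.toReal_mul]
    simp only [Sum.elim_inl, Sum.elim_inr, v]
    rw [aux Z q hq0 hq1 hZ, aux W p hp0 hp1 hW]
  let S := (Finset.powersetCard i (Finset.univ : Finset (Fin m))) ×ˢ
    (Finset.powersetCard j (Finset.univ : Finset (Fin m)))
  have hsub : (⋃ AB ∈ S, E AB) ⊆ {ω | ∑ k, Z k ω = i ∧ ∑ k, W k ω = j} := by
    intro ω hω
    obtain ⟨AB, hAB, hE⟩ := Set.mem_iUnion₂.1 hω
    simp only [S, Finset.mem_product, Finset.mem_powersetCard] at hAB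
    constructor
    · rw [Finset.sum_congr rfl fun k _ => hEZ AB ω hE k]
      simp [hAB.1.2]
    · rw [Finset.sum_congr rfl fun k _ => hEW AB ω hE k]
      simp [hAB.2.2]
  refine le_trans (le_of_eq ?_) (ENNReal.toReal_mono (measure_ne_top _ _) (measure_mono hsub))
  rw [measure_biUnion_finset (fun x _ y _ hxy => hdisj x y hxy) (fun x _ => hmE x),
    ENNReal.toReal_sum (fun _ _ => measure_ne_top _ _)]
  have hc : ∀ AB ∈ S, (μ (E AB)).toReal = (q ^ i * (1 - q) ^ (m - i)) *
      (p ^ j * (1 - p) ^ (m - j)) := by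
    intro AB hAB
    simp only [S, Finset.mem_product, Finset.mem_powersetCard] at hAB
    rw [hprob, hAB.1.2, hAB.2.2]
  rw [Finset.sum_congr rfl hc]
  simp [S]
  ring

theorem sbm_llr_lower_bound_few_features
    (a b : ℝ) (hb : 0 < b) (hab : b < a)
    (C : ℝ) (hC : 0 < C)
    (K : ℕ → ℕ) (hK : Tendsto (fun n => (K n : ℝ) / Real.log n) atTop (nhds 0))
    (Ω : ℕ → Type*) (mΩ : ∀ n, MeasurableSpace (Ω n))
    (P : ∀ n, Measure (Ω n)) (hP : ∀ n, IsProbabilityMeasure (P n))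
    (Z W : ∀ n, Fin (half n) → Ω n → ℝ)
    (h : ∀ n, Fin (K n) → Ω n → ℝ)
    (hmZ : ∀ n k, Measurable (Z n k)) (hmW : ∀ n k, Measurable (W n k))
    (hmh : ∀ n j, Measurable (h n j))
    (hindep : ∀ n, 3 ≤ n →
      iIndepFun
        (Sum.elim (Z n) (Sum.elim (W n) (h n))) (P n))
    (hZ : ∀ n, 3 ≤ n → ∀ k,
      P n {ω | Z n k ω = 1} = ENNReal.ofReal (min 1 (b * Real.log n / n)) ∧
      P n {ω | Z n k ω = 0} = 1 - ENNReal.ofReal (min 1 (b * Real.log n / n)))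
    (hW : ∀ n, 3 ≤ n → ∀ k,
      P n {ω | W n k ω = 1} = ENNReal.ofReal (min 1 (a * Real.log n / n)) ∧
      P n {ω | W n k ω = 0} = 1 - ENNReal.ofReal (min 1 (a * Real.log n / n)))
    (hhid : ∀ n, 3 ≤ n → ∀ j j' : Fin (K n),
      Measure.map (h n j) (P n) = Measure.map (h n j') (P n))
    (hhbdd : ∀ n, 3 ≤ n → ∀ j : Fin (K n), ∀ᵐ ω ∂(P n), |h n j ω| ≤ C) :
    ∀ ε > (0 : ℝ), ∃ N : ℕ, ∀ n ≥ N,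
      (n : ℝ) ^ (-((Real.sqrt a - Real.sqrt b) ^ 2) / 2 - ε)
        ≤ (P n {ω | (1 / Real.log (a / b)) * (∑ j, h n j ω)
              + 1 + Real.log n / Real.log (Real.log n)
            ≤ ∑ k, (Z n k ω - W n k ω)}).toReal := by
  intro ε hε
  have ha : 0 < a := hb.trans hab
  have hT : 0 < Real.log (a / b) := Real.log_pos (by rw [lt_div_iff₀ hb]; linarith)
  have hL := tendsto_log_nat
  set s : ℝ := Real.sqrt (a * b) / 2 with hs_def
  have hs : 0 < s := by positivity
  let t : ℕ → ℝ := fun n => (1 / Real.log (a / b)) * (K n * C) + 1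
    + Real.log n / Real.log (Real.log n)
  let j : ℕ → ℕ := fun n => ⌈s * Real.log n⌉₊
  let i : ℕ → ℕ := fun n => j n + ⌈t n⌉₊
  have hj : Tendsto (fun n => (j n : ℝ) / Real.log n) atTop (nhds s) :=
    (tendsto_nat_ceil_mul_div_atTop hs.le).comp hL
  have hinvL : Tendsto (fun n : ℕ => 1 / Real.log n) atTop (nhds 0) := by
    exact tendsto_const_nhds.div_atTop hL
  have hLL : Tendsto (fun n : ℕ => Real.log (Real.log n)) atTop atTop :=
    Real.tendsto_log_atTop.comp hL
  have hinvLL : Tendsto (fun n : ℕ => 1 / Real.log (Real.log n)) atTop (nhds 0) := by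
    exact tendsto_const_nhds.div_atTop hLL
  have ht : Tendsto (fun n => (t n + 1) / Real.log n) atTop (nhds 0) := by
    have := (((hK.const_mul (1 / Real.log (a / b) * C)).add hinvL).add hinvLL).add hinvL
    simp only [mul_zero, add_zero] at this
    refine this.congr' ?_
    filter_upwards [hL.eventually_gt_atTop 0, hLL.eventually_gt_atTop 0] with n h1 h2
    simp only [t]
    generalize Real.log (Real.log n) = Y at *
    field_simp
  have hr : Tendsto (fun n => (⌈t n⌉₊ : ℝ) / Real.log n) atTop (nhds 0) := by
    refine squeeze_zero' ?_ ?_ ht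
    · filter_upwards [hL.eventually_gt_atTop 0] with n h1
      positivity
    · filter_upwards [hL.eventually_gt_atTop 0, hLL.eventually_gt_atTop 0] with n h1 h2
      have : 0 ≤ t n := by simp only [t]; positivity
      gcongr
      exact (Nat.ceil_lt_add_one this).le
  have hi : Tendsto (fun n => (i n : ℝ) / Real.log n) atTop (nhds s) := by
    have := hj.add hr
    rw [add_zero] at this
    refine this.congr fun n => ?_
    simp only [i]; push_cast; ring
  have hZa := binom_asymp b s hb hs i hi (ε / 2) (by linarith)
  have hWa := binom_asymp a s ha hs j hj (ε / 2) (by linarith)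
  have hexp : -((Real.sqrt a - Real.sqrt b) ^ 2) / 2 - ε =
      (s * Real.log (b / (2 * s)) + s - b / 2 - ε / 2) +
      (s * Real.log (a / (2 * s)) + s - a / 2 - ε / 2) := by
    have h2s : 2 * s = Real.sqrt (a * b) := by rw [hs_def]; ring
    have hl : Real.log (b / (2 * s)) + Real.log (a / (2 * s)) = 0 := by
      rw [← Real.log_mul (by positivity) (by positivity)]
      have : b / (2 * s) * (a / (2 * s)) = 1 := by
        rw [div_mul_div_comm, h2s, Real.mul_self_sqrt (by positivity), mul_comm b a,
          div_self (by positivity)]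
      rw [this, Real.log_one]
    have hsq : (Real.sqrt a - Real.sqrt b) ^ 2 = a + b - 2 * (2 * s) := by
      rw [h2s, Real.sqrt_mul ha.le, sub_sq, Real.sq_sqrt ha.le, Real.sq_sqrt hb.le]; ring
    rw [hsq]
    linear_combination (-s) * hl
  obtain ⟨N, hN⟩ := eventually_atTop.1 ((hZa.and hWa).and (eventually_ge_atTop 3))
  refine ⟨N, fun n hn => ?_⟩
  obtain ⟨⟨⟨hq1, hq0, hZb⟩, ⟨hp1, hp0, hWb⟩⟩, hn3⟩ := hN n hn
  have hn0 : (0 : ℝ) < n := by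
    have : 0 < n := by omega
    exact_mod_cast this
  have hZ' := hZ n hn3
  have hW' := hW n hn3
  rw [min_eq_right hq1.le] at hZ'
  rw [min_eq_right hp1.le] at hW'
  haveI := hP n
  have hpl := prob_lower (P n) (Z n) (W n) (h n) (hmZ n) (hmW n) (hindep n hn3)
    _ _ hq0.le hq1.le hp0.le hp1.le hZ' hW' (i n) (j n)
  have hlow : (n : ℝ) ^ (-((Real.sqrt a - Real.sqrt b) ^ 2) / 2 - ε) ≤
      (P n {ω | ∑ k, Z n k ω = i n ∧ ∑ k, W n k ω = j n}).toReal := by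
    refine le_trans ?_ hpl
    rw [Real.rpow_def_of_pos hn0, hexp, mul_add, Real.exp_add]
    exact mul_le_mul hZb hWb (Real.exp_pos _).le ((Real.exp_pos _).le.trans hZb)
  refine hlow.trans (ENNReal.toReal_mono (measure_ne_top _ _) (measure_mono_ae ?_))
  filter_upwards [ae_all_iff.2 (hhbdd n hn3)] with ω hω
  rintro ⟨h1, h2⟩
  change _ ≤ ∑ k, (Z n k ω - W n k ω)
  rw [Finset.sum_sub_distrib, h1, h2]
  have hsum : ∑ x, h n x ω ≤ K n * C := by
    refine (Finset.sum_le_sum fun x _ => (le_abs_self _).trans (hω x)).trans ?_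
    simp
  have hfin : t n ≤ (⌈t n⌉₊ : ℝ) := Nat.le_ceil _
  have hmul : (1 / Real.log (a / b)) * (∑ x, h n x ω) ≤ (1 / Real.log (a / b)) * (K n * C) :=
    mul_le_mul_of_nonneg_left hsum (by positivity)
  have hcast : (i n : ℝ) = j n + ⌈t n⌉₊ := by simp only [i]; push_cast; ring
  rw [hcast]
  simp only [t] at hfin ⊢
  linarith
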